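/- Let n ≥ 2, 2 ≤ p < ∞, κ ≥ 0, λ ≥ 0, and let e_n be a fixed unit vector in ℝⁿ. Then max_{|z|=1} ∫_{S^{n-1}} ω_{κ,λ}(⟨e_σ, e_n⟩) |⟨e_σ, e_n⟩|^{(n+p+2)/(p-1)} |⟨e_σ, z⟩|^{p/(p-1)} dσ = ∫_{S^{n-1}} ω_{κ,λ}(⟨e_σ, e_n⟩) |⟨e_σ, e_n⟩|^{(n+2(p+1))/(p-1)} dσ, i.e., the maximum over unit vectors z is attained at z = e_n. -/

import Mathlib

/-!
Let `u = |⟨σ, eₙ⟩|`, `v = |⟨σ, z⟩|`. The integrand of `I z` has the form `G u * H v` with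
`H t = t ^ (p / (p - 1))` and `G t = ω t * t ^ ((n + p + 2) / (p - 1))`, both nondecreasing on
`[0, ∞)`: `ω` is an integral of a nonnegative function over a tail which grows with `|u|`.
Hence `(G u - G v) * (H u - H v) ≥ 0`, that is,
`G u * H v + G v * H u ≤ G u * H u + G v * H v`.
The reflection exchanging the unit vectors `eₙ` and `z` preserves the surface measure
(`measurePreserving_sphereHomeomorph`) and swaps `u` with `v`, so after integration both terms on
the left equal `I z` and both terms on the right equal `I eₙ`. No orthogonal decomposition of `z`
is needed. All the integrands are bounded and measurable, hence integrable.
-/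


open MeasureTheory Real RealInnerProductSpace

/-- The function `ω_{κ,λ}`. -/
noncomputable def omegaKL (κ lam u : ℝ) : ℝ :=
  if u = 0 then (if κ = 0 then Real.Gamma (lam + 1) else 0)
  else ∫ ξ in Set.Ioi (κ / u ^ 2), ξ ^ lam * Real.exp (-ξ)

/-- The self-homeomorphism of the unit sphere induced by a linear isometry. -/
def sphereHomeomorph {E : Type*} [NormedAddCommGroup E] [NormedSpace ℝ E] (T : E ≃ₗᵢ[ℝ] E) :
    Metric.sphere (0 : E) 1 ≃ₜ Metric.sphere (0 : E) 1 :=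
  T.toHomeomorph.subtype (fun x => by simp)

lemma coe_sphereHomeomorph {E : Type*} [NormedAddCommGroup E] [NormedSpace ℝ E]
    (T : E ≃ₗᵢ[ℝ] E) (σ : Metric.sphere (0 : E) 1) :
    (sphereHomeomorph T σ : E) = T σ := rfl

/-- Surface measure is invariant under linear isometries, because the measure of a set is that
of a truncated cone over it, up to a constant, and Lebesgue measure is invariant. -/
lemma measurePreserving_sphereHomeomorph {n : ℕ}
    (T : EuclideanSpace ℝ (Fin n) ≃ₗᵢ[ℝ] EuclideanSpace ℝ (Fin n)) :
    MeasurePreserving (sphereHomeomorph T)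
      (volume : Measure (EuclideanSpace ℝ (Fin n))).toSphere
      (volume : Measure (EuclideanSpace ℝ (Fin n))).toSphere := by
  refine ⟨(sphereHomeomorph T).measurable, ?_⟩
  ext s hs
  rw [Measure.map_apply (sphereHomeomorph T).measurable hs, Measure.toSphere_apply' _ hs,
    Measure.toSphere_apply' _ ((sphereHomeomorph T).measurable hs)]
  congr 1
  have hT : MeasurePreserving T.toMeasurableEquiv volume volume := T.measurePreserving
  refine Eq.trans ?_ (hT.measure_preimage_equiv _)
  congr 1
  ext x
  simp only [Set.mem_smul, Set.mem_image, Set.mem_preimage]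
  constructor
  · rintro ⟨r, hr, _, ⟨σ, hσ, rfl⟩, rfl⟩
    exact ⟨r, hr, T σ, ⟨sphereHomeomorph T σ, hσ, rfl⟩, (map_smul T r _).symm⟩
  · rintro ⟨r, hr, _, ⟨σ, hσ, rfl⟩, h⟩
    refine ⟨r, hr, (sphereHomeomorph T).symm σ, ⟨_, ?_, rfl⟩, ?_⟩
    · simpa using hσ
    · apply T.injective
      rw [map_smul, ← coe_sphereHomeomorph, Homeomorph.apply_symm_apply]
      exact h

lemma integrableOn_rpow_mul_exp {lam : ℝ} (hlam : 0 ≤ lam) :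
    IntegrableOn (fun ξ : ℝ => ξ ^ lam * Real.exp (-ξ)) (Set.Ioi 0) := by
  have h := Real.GammaIntegral_convergent (s := lam + 1) (by linarith)
  simpa [mul_comm] using h

lemma omegaKL_abs (κ lam u : ℝ) : omegaKL κ lam |u| = omegaKL κ lam u := by
  simp [omegaKL]

lemma setIntegral_mono_tail {lam : ℝ} (hlam : 0 ≤ lam) {a b : ℝ} (ha : 0 ≤ a) (hab : a ≤ b) :
    ∫ ξ in Set.Ioi b, ξ ^ lam * Real.exp (-ξ) ≤ ∫ ξ in Set.Ioi a, ξ ^ lam * Real.exp (-ξ) := by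
  refine setIntegral_mono_set
    ((integrableOn_rpow_mul_exp hlam).mono_set (Set.Ioi_subset_Ioi ha)) ?_
    (Set.Ioi_subset_Ioi hab).eventuallyLE
  filter_upwards [ae_restrict_mem measurableSet_Ioi] with ξ hξ
  have : 0 < ξ := ha.trans_lt hξ
  simp only [Pi.zero_apply]
  positivity

lemma omegaKL_nonneg {κ lam : ℝ} (hκ : 0 ≤ κ) (hlam : 0 ≤ lam) (u : ℝ) :
    0 ≤ omegaKL κ lam u := by
  unfold omegaKL
  split_ifs
  · exact (Real.Gamma_pos_of_pos (by linarith)).le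
  · exact le_rfl
  · refine setIntegral_nonneg measurableSet_Ioi fun ξ hξ => ?_
    have : 0 < ξ := lt_of_le_of_lt (by positivity) hξ
    positivity

lemma Gamma_eq_tail {lam : ℝ} (hlam : 0 ≤ lam) :
    Real.Gamma (lam + 1) = ∫ ξ in Set.Ioi (0 : ℝ), ξ ^ lam * Real.exp (-ξ) := by
  rw [Real.Gamma_eq_integral (by linarith)]
  simp [mul_comm]

lemma omegaKL_le_Gamma {κ lam : ℝ} (hκ : 0 ≤ κ) (hlam : 0 ≤ lam) (u : ℝ) :
    omegaKL κ lam u ≤ Real.Gamma (lam + 1) := by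
  unfold omegaKL
  split_ifs
  · exact le_rfl
  · exact (Real.Gamma_pos_of_pos (by linarith)).le
  · rw [Gamma_eq_tail hlam]
    exact setIntegral_mono_tail hlam le_rfl (by positivity)

lemma omegaKL_mono {κ lam : ℝ} (hκ : 0 ≤ κ) (hlam : 0 ≤ lam) {s t : ℝ} (hs : 0 ≤ s)
    (hst : s ≤ t) : omegaKL κ lam s ≤ omegaKL κ lam t := by
  rcases hs.eq_or_lt with rfl | hs
  · by_cases h : κ = 0
    · subst h
      by_cases ht : t = 0
      · rw [ht]
      · simp [omegaKL, ht, Gamma_eq_tail hlam]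
    · simpa [omegaKL, h] using omegaKL_nonneg hκ hlam t
  · have ht : 0 < t := hs.trans_le hst
    simp only [omegaKL, hs.ne', ht.ne', if_false]
    exact setIntegral_mono_tail hlam (by positivity) (by gcongr)

lemma measurable_omegaKL {κ lam : ℝ} (hκ : 0 ≤ κ) (hlam : 0 ≤ lam) :
    Measurable (omegaKL κ lam) := by
  have h : Monotone fun t => omegaKL κ lam (max t 0) := fun s t hst =>
    omegaKL_mono hκ hlam (le_max_right _ _) (max_le_max_right 0 hst)
  have h2 : omegaKL κ lam = (fun t => omegaKL κ lam (max t 0)) ∘ fun u => |u| := by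
    funext u
    simp [omegaKL_abs]
  rw [h2]
  exact h.measurable.comp measurable_abs

/-- Boundedness of the integrands, hence integrability. Here `x` and `y` play the roles of the
two unit vectors, in either order or equal. -/
lemma integrable_integrand {n : ℕ} {κ lam a b : ℝ} (hκ : 0 ≤ κ) (hlam : 0 ≤ lam) (ha : 0 ≤ a)
    (hb : 0 ≤ b) (x y : EuclideanSpace ℝ (Fin n)) (hx : ‖x‖ = 1) (hy : ‖y‖ = 1) :
    Integrable (fun σ : Metric.sphere (0 : EuclideanSpace ℝ (Fin n)) 1 =>
      omegaKL κ lam ⟪(σ : EuclideanSpace ℝ (Fin n)), x⟫ *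
        |⟪(σ : EuclideanSpace ℝ (Fin n)), x⟫| ^ a *
        |⟪(σ : EuclideanSpace ℝ (Fin n)), y⟫| ^ b)
      (volume : Measure (EuclideanSpace ℝ (Fin n))).toSphere := by
  have hm : ∀ w : EuclideanSpace ℝ (Fin n), Measurable
      fun σ : Metric.sphere (0 : EuclideanSpace ℝ (Fin n)) 1 =>
        ⟪(σ : EuclideanSpace ℝ (Fin n)), w⟫ := fun w =>
    (Continuous.inner continuous_subtype_val continuous_const).measurable
  have hle : ∀ w : EuclideanSpace ℝ (Fin n), ‖w‖ = 1 →
      ∀ σ : Metric.sphere (0 : EuclideanSpace ℝ (Fin n)) 1,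
        |⟪(σ : EuclideanSpace ℝ (Fin n)), w⟫| ≤ 1 := fun w hw σ => by
    simpa [hw] using abs_real_inner_le_norm (σ : EuclideanSpace ℝ (Fin n)) w
  have hG : 0 ≤ Real.Gamma (lam + 1) := (Real.Gamma_pos_of_pos (by linarith)).le
  refine Integrable.of_bound (Measurable.aestronglyMeasurable ?_) (Real.Gamma (lam + 1) * 1 * 1)
    (Filter.Eventually.of_forall fun σ => ?_)
  · exact (((measurable_omegaKL hκ hlam).comp (hm x)).mul ((hm x).abs.pow_const a)).mul
      ((hm y).abs.pow_const b)
  · have h0 := omegaKL_nonneg hκ hlam ⟪(σ : EuclideanSpace ℝ (Fin n)), x⟫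
    rw [Real.norm_of_nonneg (by positivity)]
    gcongr
    · exact omegaKL_le_Gamma hκ hlam _
    · exact Real.rpow_le_one (abs_nonneg _) (hle x hx σ) ha
    · exact Real.rpow_le_one (abs_nonneg _) (hle y hy σ) hb

lemma rearrangement {κ lam a b : ℝ} (hκ : 0 ≤ κ) (hlam : 0 ≤ lam) (ha : 0 ≤ a)
    (hb : 0 ≤ b) (u v : ℝ) :
    omegaKL κ lam u * |u| ^ a * |v| ^ b + omegaKL κ lam v * |v| ^ a * |u| ^ b ≤
      omegaKL κ lam u * |u| ^ a * |u| ^ b + omegaKL κ lam v * |v| ^ a * |v| ^ b := by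
  wlog h : |u| ≤ |v| generalizing u v
  · have := this v u (le_of_not_ge h)
    linarith
  have hG : omegaKL κ lam u * |u| ^ a ≤ omegaKL κ lam v * |v| ^ a := by
    have h1 : omegaKL κ lam u ≤ omegaKL κ lam v := by
      simpa only [omegaKL_abs] using omegaKL_mono hκ hlam (abs_nonneg u) h
    have := omegaKL_nonneg hκ hlam v
    gcongr
  have hH : |u| ^ b ≤ |v| ^ b := by gcongr
  nlinarith [mul_nonneg (sub_nonneg.2 hG) (sub_nonneg.2 hH)]

/-- The extremal problem for the Dirichlet heat estimate: for `2 ≤ p < ∞` the maximum over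
unit vectors `z` of `∫_{S^{n-1}} ω_{κ,λ}(⟨e_σ,eₙ⟩)|⟨e_σ,eₙ⟩|^{(n+p+2)/(p-1)}|⟨e_σ,z⟩|^{p/(p-1)}dσ`
is attained at `z = eₙ`, and equals `∫_{S^{n-1}} ω_{κ,λ}(⟨e_σ,eₙ⟩)|⟨e_σ,eₙ⟩|^{(n+2(p+1))/(p-1)}dσ`. -/
theorem stmt_13 (n : ℕ) (hn : 2 ≤ n) (p : ℝ) (hp : 2 ≤ p)
    (κ lam : ℝ) (hκ : 0 ≤ κ) (hlam : 0 ≤ lam)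
    (en : EuclideanSpace ℝ (Fin n)) (hen : ‖en‖ = 1)
    (I : EuclideanSpace ℝ (Fin n) → ℝ)
    (hI : ∀ z : EuclideanSpace ℝ (Fin n),
      I z = ∫ σ : Metric.sphere (0 : EuclideanSpace ℝ (Fin n)) 1,
        omegaKL κ lam ⟪(σ : EuclideanSpace ℝ (Fin n)), en⟫ *
          |⟪(σ : EuclideanSpace ℝ (Fin n)), en⟫| ^ (((n : ℝ) + p + 2) / (p - 1)) *
          |⟪(σ : EuclideanSpace ℝ (Fin n)), z⟫| ^ (p / (p - 1))
        ∂(volume : Measure (EuclideanSpace ℝ (Fin n))).toSphere) :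
    (∀ z : EuclideanSpace ℝ (Fin n), ‖z‖ = 1 → I z ≤ I en) ∧
    I en = ∫ σ : Metric.sphere (0 : EuclideanSpace ℝ (Fin n)) 1,
      omegaKL κ lam ⟪(σ : EuclideanSpace ℝ (Fin n)), en⟫ *
        |⟪(σ : EuclideanSpace ℝ (Fin n)), en⟫| ^ (((n : ℝ) + 2 * (p + 1)) / (p - 1))
      ∂(volume : Measure (EuclideanSpace ℝ (Fin n))).toSphere := by
  have hp1 : 0 < p - 1 := by linarith
  have hn0 : (0 : ℝ) ≤ n := n.cast_nonneg
  have ha : 0 ≤ ((n : ℝ) + p + 2) / (p - 1) := div_nonneg (by linarith) hp1.le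
  have hb : 0 ≤ p / (p - 1) := div_nonneg (by linarith) hp1.le
  refine ⟨fun z hz => ?_, ?_⟩
  · set T := (ℝ ∙ (en - z))ᗮ.reflection with hT
    have hTe : T en = z := Submodule.reflection_sub (by rw [hen, hz])
    have hTz : T z = en := by rw [← hTe]; exact Submodule.reflection_reflection _ _
    have hie : ∀ x : EuclideanSpace ℝ (Fin n), ⟪T x, en⟫ = ⟪x, z⟫ := fun x => by
      rw [← hTz, T.inner_map_map]
    have hiz : ∀ x : EuclideanSpace ℝ (Fin n), ⟪T x, z⟫ = ⟪x, en⟫ := fun x => by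
      rw [← hTe, T.inner_map_map]
    have hmp := measurePreserving_sphereHomeomorph T
    have hemb := (sphereHomeomorph T).measurableEmbedding
    -- Both integrals rewritten through the reflection, which exchanges `en` and `z`.
    have e1 := hI z
    rw [← hmp.integral_comp hemb] at e1
    have e2 := hI en
    rw [← hmp.integral_comp hemb] at e2
    simp only [coe_sphereHomeomorph, hie, hiz] at e1 e2
    have i1 := integrable_integrand hκ hlam ha hb en z hen hz
    have i2 := integrable_integrand hκ hlam ha hb z en hz hen
    have i3 := integrable_integrand hκ hlam ha hb en en hen hen
    have i4 := integrable_integrand hκ hlam ha hb z z hz hz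
    have key := integral_mono (i1.add i2) (i3.add i4) fun σ =>
      rearrangement hκ hlam ha hb ⟪(σ : EuclideanSpace ℝ (Fin n)), en⟫
        ⟪(σ : EuclideanSpace ℝ (Fin n)), z⟫
    simp only [Pi.add_def] at key
    rw [integral_add i1 i2, integral_add i3 i4, ← e1, ← e2, ← hI z, ← hI en] at key
    linarith
  · rw [hI]
    congr 1
    funext σ
    rw [mul_assoc, ← Real.rpow_add_of_nonneg (abs_nonneg _) ha hb, ← add_div]
    ring_nf
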